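/- Let 𝔤 be a finite-dimensional complex simple Lie algebra with root system Φ, base Δ, and let α ∈ Δ be a long simple root; set Σ_q := {α} ∪ N(α), q_1^V := ⊕{𝔤_β : n_α(β) = 0, ht_{Σ_q}(β) = 1} and q_2 := ⊕_{ht_{Σ_q}(δ)=2} 𝔤_δ. Then the Lie bracket induces a linear isomorphism 𝔤_α ⊗ q_1^V → q_2, X ⊗ Y ↦ ⁅X, Y⁆; similarly 𝔤_{-α} ⊗ q_{-1}^V → q_{-2} is an isomorphism. -/

import Mathlib

open scoped RealInnerProductSpace Classical TensorProduct

/-!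
The degree-zero part of the root decomposition is a Cartan subalgebra, and every weight space of it
is homogeneous. For a weight `χ` of degree `α`, reflection in `χ` moves a weight of degree `β` to
one of degree `β - k • α`; as `α` is long, this forces `k` to be `0` or the Cartan pairing of `β`
with `α`. Since the weights not orthogonal to `χ` span, by irreducibility, the coroot of `χ` acts
on `𝔤_β` by the Cartan pairing, and so `𝔤_α` is a line with an `𝔰𝔩₂`-triple `(t, e, f)`.

For a long simple root the Cartan pairing of `β` with `α` is `3 n_α(β) - ht_{Σ_q}(β)`. Longness
gives `n_α = 1` in height `2`, so the pairing is `-1` on `q_1^V` and `1` on `q_2`. As `ad f`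
vanishes on `q_1^V` and `ad e` on `q_2`, the relation `⁅e, f⁆ = t` makes `ad e` and `ad f`
mutually inverse between the two.
-/

namespace BracketTensorIso

section TensorIso

variable {K L : Type*} [Field K] [LieRing L] [LieAlgebra K L]

/-- The Lie bracket induces a linear isomorphism `X ⊗ P ≃ Q`. -/
def LieTensorIso (X P Q : Submodule K L) : Prop :=
  ∃ e : (X ⊗[K] P) ≃ₗ[K] Q, ∀ (x : X) (y : P), (e (x ⊗ₜ[K] y) : L) = ⁅(x : L), (y : L)⁆

lemma lieTensorIso_span_singleton {P Q : Submodule K L} {x y : L} (hx : x ≠ 0)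
    (hPQ : ∀ p ∈ P, ⁅x, p⁆ ∈ Q) (hQP : ∀ q ∈ Q, ⁅y, q⁆ ∈ P)
    (hyx : ∀ p ∈ P, ⁅y, ⁅x, p⁆⁆ = p) (hxy : ∀ q ∈ Q, ⁅x, ⁅y, q⁆⁆ = q) :
    LieTensorIso (K ∙ x) P Q := by
  let lineEquiv : K ≃ₗ[K] K ∙ x := LinearEquiv.toSpanNonzeroSingleton K L x hx
  let adEquiv : P ≃ₗ[K] Q := LinearEquiv.ofLinearMap
    ((LieAlgebra.ad K L x : L →ₗ[K] L).restrict hPQ)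
    ((LieAlgebra.ad K L y : L →ₗ[K] L).restrict hQP)
    (LinearMap.ext fun q => Subtype.ext (hxy q q.2))
    (LinearMap.ext fun p => Subtype.ext (hyx p p.2))
  refine ⟨TensorProduct.congr lineEquiv.symm adEquiv ≪≫ₗ TensorProduct.lid K Q, fun a b => ?_⟩
  obtain ⟨c, rfl⟩ := lineEquiv.surjective a
  rw [LinearEquiv.trans_apply, TensorProduct.congr_tmul, LinearEquiv.symm_apply_apply,
    TensorProduct.lid_tmul]
  exact (smul_lie c x (b : L)).symm

variable {ι : Type*} {G : ι → Submodule K L} {A B : Set ι} {x y : L}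

lemma lie_mem_of_mem_biSup {Q : Submodule K L} (h : ∀ i ∈ A, ∀ z ∈ G i, ⁅x, z⁆ ∈ Q) :
    ∀ z ∈ ⨆ i ∈ A, G i, ⁅x, z⁆ ∈ Q := by
  suffices (⨆ i ∈ A, G i) ≤ Q.comap (LieAlgebra.ad K L x : L →ₗ[K] L) from fun z hz => this hz
  exact iSup₂_le h

lemma lie_lie_eq_self_of_mem_biSup (h : ∀ i ∈ A, ∀ z ∈ G i, ⁅y, ⁅x, z⁆⁆ = z) :
    ∀ z ∈ ⨆ i ∈ A, G i, ⁅y, ⁅x, z⁆⁆ = z := by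
  suffices (⨆ i ∈ A, G i) ≤ LinearMap.eqLocus
      ((LieAlgebra.ad K L y : L →ₗ[K] L) ∘ₗ (LieAlgebra.ad K L x : L →ₗ[K] L)) LinearMap.id from
    fun z hz => this hz
  exact iSup₂_le h

lemma lieTensorIso_biSup (hx : x ≠ 0)
    (hAB : ∀ i ∈ A, ∀ z ∈ G i, ⁅x, z⁆ ∈ ⨆ j ∈ B, G j)
    (hBA : ∀ i ∈ B, ∀ z ∈ G i, ⁅y, z⁆ ∈ ⨆ j ∈ A, G j)
    (hyx : ∀ i ∈ A, ∀ z ∈ G i, ⁅y, ⁅x, z⁆⁆ = z) (hxy : ∀ i ∈ B, ∀ z ∈ G i, ⁅x, ⁅y, z⁆⁆ = z) :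
    LieTensorIso (K ∙ x) (⨆ i ∈ A, G i) (⨆ i ∈ B, G i) :=
  lieTensorIso_span_singleton hx (lie_mem_of_mem_biSup hAB) (lie_mem_of_mem_biSup hBA)
    (lie_lie_eq_self_of_mem_biSup hyx) (lie_lie_eq_self_of_mem_biSup hxy)

end TensorIso

section Functionals

variable (K : Type*) [Field K] [CharZero K]

lemma exists_addMonoidHom_real_map_one : ∃ f : ℝ →+ K, f 1 = 1 := by
  obtain ⟨f, hf⟩ := Module.Projective.exists_dual_eq_one ℚ (one_ne_zero (α := ℝ))
  exact ⟨(algebraMap ℚ K : ℚ →+ K).comp f.toAddMonoidHom, by simp [hf]⟩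

variable {E : Type*} [AddCommGroup E] [Module ℝ E]

lemma exists_addMonoidHom_ne_zero {x : E} (hx : x ≠ 0) : ∃ φ : E →+ K, φ x ≠ 0 := by
  obtain ⟨f, hf⟩ := exists_addMonoidHom_real_map_one K
  obtain ⟨ℓ, hℓ⟩ := Module.Projective.exists_dual_eq_one ℝ hx
  exact ⟨f.comp ℓ.toAddMonoidHom, by simp [hℓ, hf]⟩

lemma exists_addMonoidHom_eq_intCast (ℓ : E →ₗ[ℝ] ℝ) :
    ∃ φ : E →+ K, ∀ (x : E) (m : ℤ), ℓ x = m → φ x = m := by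
  obtain ⟨f, hf⟩ := exists_addMonoidHom_real_map_one K
  refine ⟨f.comp ℓ.toAddMonoidHom, fun x m hx => ?_⟩
  have : f (m • (1 : ℝ)) = m • f 1 := map_zsmul f m 1
  simpa [hx, hf] using this

end Functionals

section Graded

open DirectSum

variable {ι K L : Type*} [AddCommGroup ι] [Field K] [LieRing L] [LieAlgebra K L]
  (G : ι → Submodule K L) [GradedLieAlgebra G]

lemma coe_decompose_lie_of_right_mem {β : ι} {z : L} (hz : z ∈ G β) (x : L) (γ : ι) :
    (decompose G ⁅x, z⁆ (γ + β) : L) = ⁅(decompose G x γ : L), z⁆ := by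
  induction x using Decomposition.inductionOn G with
  | zero => simp
  | add x y hx hy =>
    rw [add_lie, decompose_add, decompose_add, DirectSum.add_apply, DirectSum.add_apply,
      Submodule.coe_add, Submodule.coe_add, hx, hy, add_lie]
  | @homogeneous δ x =>
    have hxz : ⁅(x : L), z⁆ ∈ G (δ + β) := SetLike.GradedBracket.bracket_mem x.2 hz
    by_cases hδ : δ = γ
    · subst hδ
      rw [decompose_of_mem_same G hxz, decompose_of_mem_same G x.2]
    · rw [decompose_of_mem_ne G hxz (by simpa using hδ), decompose_of_mem_ne G x.2 hδ, zero_lie]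

lemma coe_decompose_lie_of_mem_zero {x : L} (hx : x ∈ G 0) (z : L) (γ : ι) :
    (decompose G ⁅x, z⁆ γ : L) = ⁅x, (decompose G z γ : L)⁆ := by
  rw [← lie_skew x z, ← lie_skew x, ← coe_decompose_lie_of_right_mem G hx z γ, add_zero,
    decompose_neg]
  rfl

lemma exists_mem_zero_forall_lie_eq_smul [FiniteDimensional K L] [LieAlgebra.IsKilling K L]
    (φ : ι →+ K) : ∃ d ∈ G 0, ∀ β, ∀ z ∈ G β, ⁅d, z⁆ = φ β • z := by
  obtain ⟨x, hx⟩ := LieDerivation.IsKilling.exists_eq_ad (LieDerivation.ofGrading G φ)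
  refine ⟨decompose G x 0, SetLike.coe_mem _, fun β z hz => ?_⟩
  have hxz : ⁅x, z⁆ = φ β • z := by
    rw [← LieDerivation.ofGrading_apply_apply G φ hz, ← hx, LieDerivation.ad_apply_apply]
  rw [← coe_decompose_lie_of_right_mem G hz, hxz, zero_add,
    decompose_of_mem_same G (Submodule.smul_mem _ _ hz)]

/-- The degree-zero part of a graded Lie algebra, as a Lie subalgebra. -/
def degreeZero : LieSubalgebra K L :=
  { G 0 with
    lie_mem' := fun hx hy =>
      add_zero (0 : ι) ▸ SetLike.GradedBracket.bracket_mem (ℒ := G) hx hy }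

lemma mem_zero_of_forall_component_eq_zero {x : L}
    (hx : ∀ β : ι, β ≠ 0 → (decompose G x β : L) = 0) : x ∈ G 0 := by
  rw [← sum_support_decompose G x]
  refine sum_mem fun β _ => ?_
  by_cases hβ : β = 0
  · exact hβ ▸ SetLike.coe_mem _
  · exact hx β hβ ▸ zero_mem _

end Graded

section RootPairing

variable {ι R M N : Type*} [Field R] [CharZero R] [AddCommGroup M] [Module R M] [AddCommGroup N]
  [Module R N] (P : RootPairing ι R M N) [P.IsIrreducible]

lemma span_root_image_setOf_pairing_ne_zero (i : ι) :
    Submodule.span R (P.root '' {j | P.pairing j i ≠ 0}) = ⊤ := by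
  refine P.span_root_image_eq_top_of_forall_orthogonal _ ⟨i, by simp⟩ fun j hj k hk => ?_
  have hji : P.pairing j i = 0 := by
    by_contra hji
    exact hj (Submodule.subset_span ⟨j, hji, rfl⟩)
  suffices P.pairing k j = 0 from ⟨P.pairing_eq_zero_iff'.mp this, this⟩
  by_contra hkj
  have hroot := P.root_reflectionPerm j k
  rw [P.reflection_apply_root] at hroot
  have hrefl : P.reflectionPerm j k ∈ {l | P.pairing l i ≠ 0} := by
    rwa [Set.mem_ofPred, ← P.root'_coroot_eq_pairing, RootPairing.root', hroot, map_sub, map_smul,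
      LinearMap.sub_apply, LinearMap.smul_apply, P.root_coroot_eq_pairing,
      P.root_coroot_eq_pairing, hji, smul_zero, sub_zero]
  have hsmul : P.pairing k j • P.root j = P.root k - P.root (P.reflectionPerm j k) := by
    rw [hroot, sub_sub_cancel]
  refine hj ((Submodule.smul_mem_iff _ hkj).mp ?_)
  rw [hsmul]
  exact sub_mem (Submodule.subset_span ⟨k, hk, rfl⟩) (Submodule.subset_span ⟨_, hrefl, rfl⟩)

end RootPairing

section Cartan

open DirectSum LieAlgebra LieAlgebra.IsKilling LieModule

variable {E K L : Type*} [AddCommGroup E] [Module ℝ E] [Field K] [CharZero K] [LieRing L]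
  [LieAlgebra K L] [FiniteDimensional K L] [IsKilling K L] {G : E → Submodule K L}
  [GradedLieAlgebra G] [IsLieAbelian (degreeZero G)]

instance degreeZero_isCartanSubalgebra : (degreeZero G).IsCartanSubalgebra where
  nilpotent := inferInstance
  self_normalizing := by
    refine le_antisymm (fun z hz => ?_) (LieSubalgebra.le_normalizer _)
    refine mem_zero_of_forall_component_eq_zero G fun β hβ => ?_
    obtain ⟨φ, hφ⟩ := exists_addMonoidHom_ne_zero K hβ
    obtain ⟨d, hd, hdG⟩ := exists_mem_zero_forall_lie_eq_smul G φ
    have hdz : ⁅d, z⁆ ∈ G 0 := by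
      rw [← lie_skew]
      exact neg_mem ((LieSubalgebra.mem_normalizer_iff _ z).mp hz d hd)
    have hcomp : φ β • (decompose G z β : L) = 0 := by
      rw [← hdG β _ (SetLike.coe_mem _), ← coe_decompose_lie_of_mem_zero G hd,
        decompose_of_mem_ne G hdz hβ.symm]
    exact (smul_eq_zero.mp hcomp).resolve_left hφ

lemma ne_bot_of_rootSpace_le {χ : Weight K (degreeZero G) L} {β : E}
    (hχβ : (rootSpace (degreeZero G) χ).toSubmodule ≤ G β) : G β ≠ ⊥ := by
  rintro hbot
  obtain ⟨v, hv, hv0⟩ := χ.exists_ne_zero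
  exact hv0 (by simpa [hbot] using hχβ hv)

variable [IsTriangularizable K (degreeZero G) L]

lemma exists_rootSpace_le (χ : Weight K (degreeZero G) L) (hχ : χ.IsNonZero) :
    ∃ β : E, (rootSpace (degreeZero G) χ).toSubmodule ≤ G β := by
  obtain ⟨v, hv, hv0⟩ := χ.exists_ne_zero
  obtain ⟨β, hβ⟩ : ∃ β, (decompose G v β : L) ≠ 0 := by
    by_contra! hall
    exact hv0 (by rw [← sum_support_decompose G v, Finset.sum_eq_zero fun β _ => hall β])
  refine ⟨β, fun w hw => ?_⟩
  have hvβ : (decompose G v β : L) ∈ rootSpace (degreeZero G) χ := by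
    refine weightSpace_le_genWeightSpace L χ ((mem_weightSpace _ _).mpr fun y => ?_)
    have hyv : ⁅(y : L), v⁆ = χ y • v := lie_eq_smul_of_mem_rootSpace hv y
    rw [LieSubalgebra.coe_bracket_of_module, ← coe_decompose_lie_of_mem_zero G y.2,
      hyv, decompose_smul, DirectSum.smul_apply, Submodule.coe_smul]
  obtain ⟨c, hc⟩ := (finrank_eq_one_iff_of_nonzero' ⟨_, hvβ⟩ (by simpa using hβ)).mp
    (finrank_rootSpace_eq_one χ hχ) ⟨w, hw⟩
  rw [← show c • (decompose G v β : L) = w from congrArg Subtype.val hc]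
  exact Submodule.smul_mem _ _ (SetLike.coe_mem _)

lemma exists_isNonZero_rootSpace_le {α : E} (hα : α ≠ 0) (hGα : G α ≠ ⊥) :
    ∃ χ : Weight K (degreeZero G) L, χ.IsNonZero ∧
      (rootSpace (degreeZero G) χ).toSubmodule ≤ G α := by
  by_contra! hall
  have hle (χ : Weight K (degreeZero G) L) :
      (rootSpace (degreeZero G) χ).toSubmodule ≤ ⨆ β ≠ α, G β := by
    by_cases hχ : χ.IsZero
    · rw [hχ.eq, rootSpace_zero_eq, LieSubalgebra.coe_toLieSubmodule]
      exact le_iSup₂_of_le 0 hα.symm le_rfl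
    · obtain ⟨β, hβ⟩ := exists_rootSpace_le χ hχ
      exact le_iSup₂_of_le β (fun h => hall χ hχ (h ▸ hβ)) hβ
  have htop : ⨆ β ≠ α, G β = ⊤ := by
    rw [eq_top_iff, ← LieSubmodule.top_toSubmodule (R := K) (L := degreeZero G),
      ← iSup_genWeightSpace_eq_top' K (degreeZero G) L, LieSubmodule.iSup_toSubmodule]
    exact iSup_le hle
  have hdisj := (Decomposition.isInternal G).submodule_iSupIndep α
  rw [htop, disjoint_top] at hdisj
  exact hGα hdisj

lemma weight_apply_eq_of_rootSpace_le {χ : Weight K (degreeZero G) L} {β : E}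
    (hχβ : (rootSpace (degreeZero G) χ).toSubmodule ≤ G β) {d : degreeZero G} {c : K}
    (hd : ∀ z ∈ G β, ⁅(d : L), z⁆ = c • z) : χ d = c := by
  obtain ⟨v, hv, hv0⟩ := χ.exists_ne_zero
  have hχd : ⁅(d : L), v⁆ = χ d • v := lie_eq_smul_of_mem_rootSpace hv d
  exact smul_left_injective K hv0 (hχd.symm.trans (hd v (hχβ hv)))

lemma rootSpace_degree_ne_zero {χ : Weight K (degreeZero G) L} (hχ : χ.IsNonZero) {β : E}
    (hχβ : (rootSpace (degreeZero G) χ).toSubmodule ≤ G β) : β ≠ 0 := by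
  rintro rfl
  refine hχ (funext fun y => weight_apply_eq_of_rootSpace_le hχβ fun z hz => ?_)
  rw [Pi.zero_apply, zero_smul]
  exact congrArg Subtype.val (trivial_lie_zero (degreeZero G) (degreeZero G) y ⟨z, hz⟩)

end Cartan

section LongDegree

open DirectSum LieAlgebra LieAlgebra.IsKilling LieModule

variable {E K L : Type*} [NormedAddCommGroup E] [InnerProductSpace ℝ E] [Field K]
  [LieRing L] [LieAlgebra K L] {G : E → Submodule K L} {α : E}

/-- The degree `α` of the graded Lie algebra plays the role of a long root: among the degrees that
occur, none is longer than `α`, and all have an integral Cartan pairing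
`2⟪β, α⟫ / ⟪α, α⟫` with `α`. -/
structure IsLongDegree (G : E → Submodule K L) (α : E) : Prop where
  ne_zero : α ≠ 0
  ne_bot : G α ≠ ⊥
  inner_self_le : ∀ β, G β ≠ ⊥ → ⟪β, β⟫ ≤ ⟪α, α⟫
  exists_int : ∀ β, G β ≠ ⊥ → ∃ m : ℤ, 2 * ⟪β, α⟫ = m * ⟪α, α⟫

lemma inner_sub_smul_self (α β : E) (c : ℝ) :
    ⟪β - c • α, β - c • α⟫ = ⟪β, β⟫ - c * (2 * ⟪β, α⟫) + c ^ 2 * ⟪α, α⟫ := by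
  simp only [inner_sub_left, inner_sub_right, real_inner_smul_left, real_inner_smul_right,
    real_inner_comm β α]
  ring

lemma IsLongDegree.inner_self_pos (hα : IsLongDegree G α) : 0 < ⟪α, α⟫ :=
  real_inner_self_pos.mpr hα.ne_zero

/-- Subtracting a multiple `k • α` other than `0` and the reflection `m • α` changes `⟪β, β⟫` by a
nonzero multiple of `⟪α, α⟫`, whereas both norms lie in `(0, ⟪α, α⟫]`. -/
lemma IsLongDegree.eq_zero_or_eq_pairing (hα : IsLongDegree G α) {β : E} (hβ0 : β ≠ 0)
    (hβ : G β ≠ ⊥) {k m : ℤ} (hm : 2 * ⟪β, α⟫ = m * ⟪α, α⟫) (hk0 : β - (k : ℝ) • α ≠ 0)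
    (hk : G (β - (k : ℝ) • α) ≠ ⊥) : k = 0 ∨ k = m := by
  have hαpos := hα.inner_self_pos
  have hβpos := real_inner_self_pos.mpr hβ0
  have hβle := hα.inner_self_le β hβ
  have hkpos := real_inner_self_pos.mpr hk0
  have hkle := hα.inner_self_le _ hk
  rw [inner_sub_smul_self, hm] at hkpos hkle
  have hlt : ((k * (k - m) : ℤ) : ℝ) < 1 := by push_cast; nlinarith
  have hgt : (-1 : ℝ) < ((k * (k - m) : ℤ) : ℝ) := by push_cast; nlinarith
  have hzero : k * (k - m) = 0 := by
    have h1 : k * (k - m) < 1 := by exact_mod_cast hlt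
    have h2 : -1 < k * (k - m) := by exact_mod_cast hgt
    omega
  simpa [sub_eq_zero] using hzero

lemma IsLongDegree.pairing_eq_neg_of_inner_neg (hα : IsLongDegree G α) {β : E} (hβ : G β ≠ ⊥)
    (hβα : β ≠ -α) (hneg : ⟪β, α⟫ < 0) : 2 * ⟪β, α⟫ = -⟪α, α⟫ := by
  obtain ⟨m, hm⟩ := hα.exists_int β hβ
  have hαpos := hα.inner_self_pos
  have hβle := hα.inner_self_le β hβ
  have hpos : 0 < ⟪β - (-1 : ℝ) • α, β - (-1 : ℝ) • α⟫ :=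
    real_inner_self_pos.mpr fun h => hβα (by simpa [add_eq_zero_iff_eq_neg] using h)
  rw [inner_sub_smul_self, hm] at hpos
  have hlt : m < 0 := by
    have : (m : ℝ) < 0 := by nlinarith
    exact_mod_cast this
  have hgt : -2 < m := by
    have : (-2 : ℝ) < m := by nlinarith
    exact_mod_cast this
  rw [hm, show m = -1 by omega, Int.cast_neg, Int.cast_one, neg_one_mul]

variable [CharZero K] [FiniteDimensional K L] [GradedLieAlgebra G]

section Killing

variable [IsKilling K L] [IsLieAbelian (degreeZero G)] [IsTriangularizable K (degreeZero G) L]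
  {χ ψ : Weight K (degreeZero G) L}

lemma rootSpace_reflectRoot_le (hψ : ψ.IsNonZero) {β : E}
    (hχα : (rootSpace (degreeZero G) χ).toSubmodule ≤ G α)
    (hψβ : (rootSpace (degreeZero G) ψ).toSubmodule ≤ G β) {k : ℤ} (hk : ψ (coroot χ) = k) :
    (rootSpace (degreeZero G) (reflectRoot χ ψ)).toSubmodule ≤ G (β - (k : ℝ) • α) := by
  obtain ⟨δ, hδ⟩ := exists_rootSpace_le (reflectRoot χ ψ) (reflectRoot_isNonZero χ ψ hψ)
  suffices δ = β - (k : ℝ) • α from this ▸ hδ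
  rw [← sub_eq_zero]
  by_contra hne
  obtain ⟨φ, hφ⟩ := exists_addMonoidHom_ne_zero K hne
  obtain ⟨d, hd, hdG⟩ := exists_mem_zero_forall_lie_eq_smul G φ
  have hreflect : reflectRoot χ ψ ⟨d, hd⟩ = φ β - k * φ α := by
    have happly : reflectRoot χ ψ ⟨d, hd⟩ = ψ ⟨d, hd⟩ - ψ (coroot χ) * χ ⟨d, hd⟩ := rfl
    rw [happly, hk, weight_apply_eq_of_rootSpace_le hψβ (hdG β),
      weight_apply_eq_of_rootSpace_le hχα (hdG α)]
  have hδφ : φ δ = φ β - k * φ α :=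
    (weight_apply_eq_of_rootSpace_le hδ (hdG δ)).symm.trans hreflect
  refine hφ ?_
  rw [map_sub, map_sub, Int.cast_smul_eq_zsmul, map_zsmul, hδφ, zsmul_eq_mul, sub_self]

lemma IsLongDegree.apply_coroot_eq_zero_or_eq (hα : IsLongDegree G α)
    (hχα : (rootSpace (degreeZero G) χ).toSubmodule ≤ G α) (hψ : ψ.IsNonZero) {β : E}
    (hψβ : (rootSpace (degreeZero G) ψ).toSubmodule ≤ G β) {m : ℤ}
    (hm : 2 * ⟪β, α⟫ = m * ⟪α, α⟫) : ψ (coroot χ) = 0 ∨ ψ (coroot χ) = m := by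
  have hk := apply_coroot_eq_cast χ ψ
  set k : ℤ := chainBotCoeff χ ψ - chainTopCoeff χ ψ
  have hrefl := rootSpace_reflectRoot_le hψ hχα hψβ hk
  rcases hα.eq_zero_or_eq_pairing (rootSpace_degree_ne_zero hψ hψβ) (ne_bot_of_rootSpace_le hψβ) hm
    (rootSpace_degree_ne_zero (reflectRoot_isNonZero χ ψ hψ) hrefl)
    (ne_bot_of_rootSpace_le hrefl) with h | h
  · exact Or.inl (by rw [hk, h, Int.cast_zero])
  · exact Or.inr (by rw [hk, h])

end Killing

variable [IsSimple K L] [IsLieAbelian (degreeZero G)] [IsTriangularizable K (degreeZero G) L]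

lemma eq_coroot_of_forall_apply_coroot_ne_zero {χ : Weight K (degreeZero G) L} (hχ : χ.IsNonZero)
    {d : degreeZero G}
    (hd : ∀ ψ : Weight K (degreeZero G) L, ψ.IsNonZero → ψ (coroot χ) ≠ 0 → ψ (coroot χ) = ψ d) :
    coroot χ = d := by
  let i : (degreeZero G).root := ⟨χ, by simpa using hχ⟩
  have hspan := span_root_image_setOf_pairing_ne_zero (rootSystem (degreeZero G)) i
  rw [← sub_eq_zero, ← Module.forall_dual_apply_eq_zero_iff K]
  suffices ⊤ ≤ LinearMap.ker (Module.Dual.eval K _ (coroot χ - d)) from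
    fun φ => this (Submodule.mem_top (x := φ))
  rw [← hspan, Submodule.span_le]
  rintro _ ⟨⟨ψ, hψ⟩, hψχ, rfl⟩
  have := hd ψ (by simpa using hψ) (by simpa [i] using hψχ)
  simpa [sub_eq_zero] using this

lemma IsLongDegree.coroot_eq (hα : IsLongDegree G α) {χ : Weight K (degreeZero G) L}
    (hχ : χ.IsNonZero) (hχα : (rootSpace (degreeZero G) χ).toSubmodule ≤ G α) {d : degreeZero G}
    (hd : ∀ β, ∀ m : ℤ, 2 * ⟪β, α⟫ = m * ⟪α, α⟫ → ∀ z ∈ G β, ⁅(d : L), z⁆ = (m : K) • z) :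
    coroot χ = d := by
  refine eq_coroot_of_forall_apply_coroot_ne_zero hχ fun ψ hψ hψχ => ?_
  obtain ⟨β, hψβ⟩ := exists_rootSpace_le ψ hψ
  obtain ⟨m, hm⟩ := hα.exists_int β (ne_bot_of_rootSpace_le hψβ)
  rw [weight_apply_eq_of_rootSpace_le hψβ (hd β m hm)]
  exact (hα.apply_coroot_eq_zero_or_eq hχα hψ hψβ hm).resolve_left hψχ

end LongDegree

section CorootTriple

open LieAlgebra LieAlgebra.IsKilling LieModule

variable {E K L : Type*} [NormedAddCommGroup E] [InnerProductSpace ℝ E] [Field K]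
  [LieRing L] [LieAlgebra K L] {G : E → Submodule K L} {α : E} {t e f : L}

/-- An `𝔰𝔩₂`-triple `(t, e, f)` with `e` and `f` homogeneous of degrees `α` and `-α`, whose
semisimple element `t` behaves as the coroot of `α`: it acts on `G β` by the Cartan pairing
`m = 2⟪β, α⟫ / ⟪α, α⟫` whenever this is an integer. -/
structure IsCorootTriple (G : E → Submodule K L) (α : E) (t e f : L) : Prop
    extends IsSl2Triple t e f where
  e_mem : e ∈ G α
  f_mem : f ∈ G (-α)
  lie_t : ∀ β, ∀ m : ℤ, 2 * ⟪β, α⟫ = m * ⟪α, α⟫ → ∀ z ∈ G β, ⁅t, z⁆ = (m : K) • z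
  lie_e : ∀ y ∈ G 0, ⁅y, e⁆ ∈ K ∙ e
  lie_f : ∀ y ∈ G 0, ⁅y, f⁆ ∈ K ∙ f

lemma exists_mem_zero_forall_lie_eq_pairing_smul [CharZero K] [FiniteDimensional K L]
    [IsKilling K L] [GradedLieAlgebra G] (hα : α ≠ 0) :
    ∃ d ∈ G 0, ∀ β, ∀ m : ℤ, 2 * ⟪β, α⟫ = m * ⟪α, α⟫ → ∀ z ∈ G β, ⁅d, z⁆ = (m : K) • z := by
  have hαα : ⟪α, α⟫ ≠ 0 := inner_self_ne_zero.mpr hα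
  obtain ⟨φ, hφ⟩ := exists_addMonoidHom_eq_intCast K ((2 / ⟪α, α⟫) • innerₗ E α)
  obtain ⟨d, hd, hdG⟩ := exists_mem_zero_forall_lie_eq_smul G φ
  refine ⟨d, hd, fun β m hm z hz => ?_⟩
  rw [hdG β z hz, hφ β m]
  rw [LinearMap.smul_apply, innerₗ_apply_apply, smul_eq_mul, real_inner_comm β, div_mul_eq_mul_div,
    hm, mul_div_cancel_right₀ _ hαα]

lemma IsLongDegree.exists_isCorootTriple [CharZero K] [FiniteDimensional K L] [IsSimple K L]
    [GradedLieAlgebra G] [IsLieAbelian (degreeZero G)] [IsTriangularizable K (degreeZero G) L]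
    (hα : IsLongDegree G α) : ∃ t e f, IsCorootTriple G α t e f := by
  obtain ⟨χ, hχ, hχα⟩ := exists_isNonZero_rootSpace_le hα.ne_zero hα.ne_bot
  obtain ⟨d, hd, hdG⟩ := exists_mem_zero_forall_lie_eq_pairing_smul (G := G) hα.ne_zero
  obtain ⟨t, e, f, hsl2, he, hf⟩ := exists_isSl2Triple_of_weight_isNonZero hχ
  have htd : t = d := by
    rw [hsl2.h_eq_coroot hχ he hf, hα.coroot_eq hχ hχα (d := ⟨d, hd⟩) hdG]
  have hnegχ : ⇑(reflectRoot χ χ) = -χ := by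
    ext y
    change χ y - χ (coroot χ) * χ y = -χ y
    rw [root_apply_coroot hχ]
    ring
  have hnegα : (rootSpace (degreeZero G) (-χ)).toSubmodule ≤ G (-α) := by
    have hrefl := rootSpace_reflectRoot_le (k := 2) hχ hχα hχα
      (by rw [root_apply_coroot hχ, Int.cast_ofNat])
    rwa [hnegχ, show α - ((2 : ℤ) : ℝ) • α = -α by push_cast; module] at hrefl
  have lie_mem {φ : degreeZero G → K} {x : L} (hx : x ∈ rootSpace (degreeZero G) φ) (y : L)
      (hy : y ∈ G 0) : ⁅y, x⁆ ∈ K ∙ x :=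
    Submodule.mem_span_singleton.mpr
      ⟨φ ⟨y, hy⟩, (lie_eq_smul_of_mem_rootSpace hx (⟨y, hy⟩ : degreeZero G)).symm⟩
  exact ⟨t, e, f, { hsl2 with
    e_mem := hχα he
    f_mem := hnegα hf
    lie_t := htd ▸ hdG
    lie_e := lie_mem he
    lie_f := lie_mem hf }⟩

lemma IsCorootTriple.symm (T : IsCorootTriple G α t e f) : IsCorootTriple G (-α) (-t) f e where
  toIsSl2Triple := T.toIsSl2Triple.symm
  e_mem := T.f_mem
  f_mem := (neg_neg α).symm ▸ T.e_mem
  lie_t β m hm z hz := by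
    have hm' : 2 * ⟪β, α⟫ = ((-m : ℤ) : ℝ) * ⟪α, α⟫ := by
      rw [inner_neg_right, inner_neg_neg] at hm
      push_cast
      linarith
    rw [neg_lie, T.lie_t β (-m) hm' z hz, Int.cast_neg, neg_smul, neg_neg]
  lie_e := T.lie_f
  lie_f := T.lie_e

lemma IsLongDegree.neg (hα : IsLongDegree G α) (hne : G (-α) ≠ ⊥) : IsLongDegree G (-α) where
  ne_zero := neg_ne_zero.mpr hα.ne_zero
  ne_bot := hne
  inner_self_le := by simpa only [inner_neg_neg] using hα.inner_self_le
  exists_int β hβ := by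
    obtain ⟨m, hm⟩ := hα.exists_int β hβ
    refine ⟨-m, ?_⟩
    rw [inner_neg_right, inner_neg_neg, mul_neg, hm, Int.cast_neg, neg_mul]

lemma IsLongDegree.add_eq_bot (hα : IsLongDegree G α) {β : E} (hβ : 0 < ⟪β, α⟫) :
    G (α + β) = ⊥ := by
  by_contra hne
  have hle := hα.inner_self_le _ hne
  rw [real_inner_add_add_self, real_inner_comm β α] at hle
  linarith [real_inner_self_nonneg (x := β)]

lemma IsLongDegree.lie_eq_zero_of_inner_pos [GradedLieAlgebra G] (hα : IsLongDegree G α) {β : E}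
    (hβ : 0 < ⟪β, α⟫) {x z : L} (hx : x ∈ G α) (hz : z ∈ G β) : ⁅x, z⁆ = 0 := by
  have hxz : ⁅x, z⁆ ∈ G (α + β) := SetLike.GradedBracket.bracket_mem hx hz
  rwa [hα.add_eq_bot hβ, Submodule.mem_bot] at hxz

lemma IsCorootTriple.ne_bot_neg (T : IsCorootTriple G α t e f) : G (-α) ≠ ⊥ := fun hbot =>
  T.f_ne_zero (by simpa [hbot] using T.f_mem)

variable [GradedLieAlgebra G]

lemma IsCorootTriple.lie_e_lie_f (T : IsCorootTriple G α t e f) (hα : IsLongDegree G α) {β : E}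
    (hβ : 0 < ⟪β, α⟫) {m : ℤ} (hm : 2 * ⟪β, α⟫ = m * ⟪α, α⟫) {z : L} (hz : z ∈ G β) :
    ⁅e, ⁅f, z⁆⁆ = (m : K) • z := by
  rw [leibniz_lie, T.lie_e_f, T.lie_t β m hm z hz, hα.lie_eq_zero_of_inner_pos hβ T.e_mem hz,
    lie_zero, add_zero]

lemma IsCorootTriple.lie_f_lie_e (T : IsCorootTriple G α t e f) (hα : IsLongDegree G α) {β : E}
    (hβ : ⟪β, α⟫ < 0) {m : ℤ} (hm : 2 * ⟪β, α⟫ = -m * ⟪α, α⟫) {z : L} (hz : z ∈ G β) :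
    ⁅f, ⁅e, z⁆⁆ = (m : K) • z := by
  refine T.symm.lie_e_lie_f (hα.neg T.ne_bot_neg) ?_ ?_ hz
  · rwa [inner_neg_right, neg_pos]
  · rw [inner_neg_right, inner_neg_neg]
    linarith

lemma IsCorootTriple.eq_span [CharZero K] (T : IsCorootTriple G α t e f) (hα : IsLongDegree G α) :
    G α = K ∙ e := by
  refine le_antisymm (fun x hx => ?_) ((Submodule.span_singleton_le_iff_mem _ _).mpr T.e_mem)
  have hfx : ⁅f, x⁆ ∈ G 0 := neg_add_cancel α ▸ SetLike.GradedBracket.bracket_mem T.f_mem hx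
  have htwo : ⁅e, ⁅f, x⁆⁆ = (2 : K) • x := by
    simpa using T.lie_e_lie_f (m := 2) hα hα.inner_self_pos (by norm_num) hx
  rw [← Submodule.smul_mem_iff _ (two_ne_zero (α := K)), ← htwo, ← lie_skew]
  exact neg_mem (T.lie_e _ hfx)

lemma IsCorootTriple.neg_add_ne_bot [CharZero K] (T : IsCorootTriple G α t e f)
    (hα : IsLongDegree G α) {β : E} (hβ : 0 < ⟪β, α⟫) (hGβ : G β ≠ ⊥) : G (-α + β) ≠ ⊥ := by
  intro hbot
  obtain ⟨z, hz, hz0⟩ := Submodule.exists_mem_ne_zero_of_ne_bot hGβ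
  obtain ⟨m, hm⟩ := hα.exists_int β hGβ
  have hm0 : m ≠ 0 := by
    rintro rfl
    rw [Int.cast_zero, zero_mul] at hm
    linarith
  have hfz : ⁅f, z⁆ ∈ G (-α + β) := SetLike.GradedBracket.bracket_mem T.f_mem hz
  rw [hbot, Submodule.mem_bot] at hfz
  have hmz : (m : K) • z = 0 := by rw [← T.lie_e_lie_f hα hβ hm hz, hfz, lie_zero]
  exact (smul_ne_zero (Int.cast_ne_zero.mpr hm0) hz0) hmz

end CorootTriple

section HeightPair

variable {E K L : Type*} [NormedAddCommGroup E] [InnerProductSpace ℝ E] [Field K]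
  [LieRing L] [LieAlgebra K L] {G : E → Submodule K L} {α : E} {ν η : E →ₗ[ℝ] ℝ}

/-- The linear functionals `ν` and `η` play the roles of `n_α` and `ht_{Σ_q}`. For a long simple
root, `3 n_α - ht_{Σ_q}` is the Cartan pairing with `α`: both take the values `2` at `α`, `-1` at
its neighbours and `0` at the other simple roots. -/
structure IsHeightPair (G : E → Submodule K L) (α : E) (ν η : E →ₗ[ℝ] ℝ) : Prop where
  ν_self : ν α = 1
  η_self : η α = 1
  exists_int : ∀ β, G β ≠ ⊥ → ∃ k : ℤ, ν β = k
  pairing_eq : ∀ β, G β ≠ ⊥ → 2 * ⟪β, α⟫ = (3 * ν β - η β) * ⟪α, α⟫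

lemma IsHeightPair.neg (P : IsHeightPair G α ν η) : IsHeightPair G (-α) (-ν) (-η) where
  ν_self := by simp [P.ν_self]
  η_self := by simp [P.η_self]
  exists_int β hβ := by
    obtain ⟨k, hk⟩ := P.exists_int β hβ
    exact ⟨-k, by simp [hk]⟩
  pairing_eq β hβ := by
    rw [inner_neg_right, inner_neg_neg, mul_neg, P.pairing_eq β hβ, LinearMap.neg_apply,
      LinearMap.neg_apply]
    ring

lemma IsHeightPair.ν_eq_one (P : IsHeightPair G α ν η) (hα : IsLongDegree G α) {β : E}
    (hβ : G β ≠ ⊥) (hηβ : η β = 2) : ν β = 1 := by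
  obtain ⟨k, hk⟩ := P.exists_int β hβ
  have hpair := P.pairing_eq β hβ
  have hαpos := hα.inner_self_pos
  have hβle := hα.inner_self_le β hβ
  have hsub : β - (1 : ℝ) • α ≠ 0 := fun h => by
    have := congrArg η h
    norm_num [hηβ, P.η_self] at this
  have hadd : β - (-1 : ℝ) • α ≠ 0 := fun h => by
    have := congrArg η h
    norm_num [hηβ, P.η_self] at this
  have hsubpos := real_inner_self_pos.mpr hsub
  have haddpos := real_inner_self_pos.mpr hadd
  rw [inner_sub_smul_self, hpair, hηβ, hk] at hsubpos haddpos
  have hlt : k < 2 := by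
    have : (k : ℝ) < 2 := by nlinarith
    exact_mod_cast this
  have hgt : 0 < k := by
    have : (0 : ℝ) < k := by nlinarith
    exact_mod_cast this
  rw [hk, show k = 1 by omega, Int.cast_one]

theorem IsHeightPair.lieTensorIso [CharZero K] [GradedLieAlgebra G] {t e f : L}
    (P : IsHeightPair G α ν η) (T : IsCorootTriple G α t e f) (hα : IsLongDegree G α) :
    LieTensorIso (G α) (⨆ β ∈ {β | ν β = 0 ∧ η β = 1}, G β) (⨆ β ∈ {β | η β = 2}, G β) := by
  rw [T.eq_span hα]
  have hαpos := hα.inner_self_pos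
  have ne_bot {β : E} {z : L} (hz : z ∈ G β) (hz0 : z ≠ 0) : G β ≠ ⊥ := fun h =>
    hz0 (by simpa [h] using hz)
  refine lieTensorIso_biSup (y := f) T.e_ne_zero ?_ ?_ ?_ ?_
  · rintro β ⟨-, hηβ⟩ z hz
    refine Submodule.mem_iSup_of_mem (α + β) (Submodule.mem_iSup_of_mem ?_
      (SetLike.GradedBracket.bracket_mem T.e_mem hz))
    norm_num [P.η_self, hηβ]
  · intro β hηβ z hz
    rcases eq_or_ne z 0 with rfl | hz0
    · simp
    refine Submodule.mem_iSup_of_mem (-α + β) (Submodule.mem_iSup_of_mem ⟨?_, ?_⟩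
      (SetLike.GradedBracket.bracket_mem T.f_mem hz))
    · simp [P.ν_self, P.ν_eq_one hα (ne_bot hz hz0) hηβ]
    · norm_num [P.η_self, show η β = 2 from hηβ]
  · rintro β ⟨hνβ, hηβ⟩ z hz
    rcases eq_or_ne z 0 with rfl | hz0
    · simp
    have hpair := P.pairing_eq β (ne_bot hz hz0)
    rw [hνβ, hηβ] at hpair
    simpa using T.lie_f_lie_e (m := 1) hα (by linarith) (by push_cast; linarith) hz
  · intro β hηβ z hz
    rcases eq_or_ne z 0 with rfl | hz0
    · simp
    have hpair := P.pairing_eq β (ne_bot hz hz0)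
    rw [P.ν_eq_one hα (ne_bot hz hz0) hηβ, show η β = 2 from hηβ] at hpair
    simpa using T.lie_e_lie_f (m := 1) hα (by linarith) (by push_cast; linarith) hz

end HeightPair

section RootDecomposition

open LieAlgebra

variable {E K L : Type*} [AddCommGroup E] [Field K] [LieRing L] [LieAlgebra K L]
  {Φ : Finset E} {h : Submodule K L} {g : E → Submodule K L}

/-- A decomposition `L = h ⊕ ⨁_{β ∈ Φ} g β` into an abelian subalgebra `h` and nonzero subspaces
indexed by a set `Φ` of nonzero vectors, compatible with the Lie bracket. Nothing is assumed about
the values of `g` outside `Φ`. -/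
structure IsRootDecomposition (Φ : Finset E) (h : Submodule K L) (g : E → Submodule K L) :
    Prop where
  zero_notMem : (0 : E) ∉ Φ
  lie_zero_zero : ∀ x ∈ h, ∀ y ∈ h, ⁅x, y⁆ = 0
  ne_bot : ∀ β ∈ Φ, g β ≠ ⊥
  lie_zero_mem : ∀ β ∈ Φ, ∀ x ∈ h, ∀ y ∈ g β, ⁅x, y⁆ ∈ g β
  lie_mem : ∀ β ∈ Φ, ∀ γ ∈ Φ, ∀ x ∈ g β, ∀ y ∈ g γ,
    (β + γ ∈ Φ → ⁅x, y⁆ ∈ g (β + γ)) ∧ (β + γ = 0 → ⁅x, y⁆ ∈ h) ∧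
      (β + γ ∉ Φ → β + γ ≠ 0 → ⁅x, y⁆ = 0)
  sup_eq_top : h ⊔ (⨆ β ∈ Φ, g β) = ⊤
  disjoint_zero : Disjoint h (⨆ β ∈ Φ, g β)
  disjoint : ∀ β ∈ Φ, Disjoint (g β) (h ⊔ ⨆ γ ∈ Φ.erase β, g γ)

/-- The grading attached to a root decomposition: `h` in degree zero, `g β` in degree `β ∈ Φ`, and
nothing in the other degrees. -/
noncomputable def rootGrading (Φ : Finset E) (h : Submodule K L) (g : E → Submodule K L) (β : E) :
    Submodule K L :=
  if β = 0 then h else if β ∈ Φ then g β else ⊥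

lemma rootGrading_zero : rootGrading Φ h g 0 = h := if_pos rfl

lemma eq_zero_or_mem_of_rootGrading_ne_bot {β : E} (hβ : rootGrading Φ h g β ≠ ⊥) :
    β = 0 ∨ β ∈ Φ := by
  contrapose! hβ
  rw [rootGrading, if_neg hβ.1, if_neg hβ.2]

namespace IsRootDecomposition

lemma rootGrading_of_mem (D : IsRootDecomposition Φ h g) {β : E} (hβ : β ∈ Φ) :
    rootGrading Φ h g β = g β := by
  rw [rootGrading, if_neg (ne_of_mem_of_not_mem hβ D.zero_notMem), if_pos hβ]

lemma rootGrading_induction (D : IsRootDecomposition Φ h g) {p : E → Submodule K L → Prop}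
    (zero : p 0 h) (root : ∀ β ∈ Φ, p β (g β)) (bot : ∀ β, p β ⊥) (β : E) :
    p β (rootGrading Φ h g β) := by
  by_cases hβ : rootGrading Φ h g β = ⊥
  · exact hβ ▸ bot β
  · rcases eq_zero_or_mem_of_rootGrading_ne_bot hβ with rfl | hβΦ
    · exact rootGrading_zero (Φ := Φ) (g := g) ▸ zero
    · exact (D.rootGrading_of_mem hβΦ).symm ▸ root β hβΦ

lemma iSup_rootGrading (D : IsRootDecomposition Φ h g) : ⨆ β, rootGrading Φ h g β = ⊤ := by
  rw [eq_top_iff, ← D.sup_eq_top]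
  refine sup_le (rootGrading_zero.symm.trans_le (le_iSup _ 0)) (iSup₂_le fun β hβ => ?_)
  exact (D.rootGrading_of_mem hβ).symm.trans_le (le_iSup _ β)

lemma iSupIndep_rootGrading (D : IsRootDecomposition Φ h g) : iSupIndep (rootGrading Φ h g) := by
  refine D.rootGrading_induction (p := fun β U => Disjoint U (⨆ γ ≠ β, rootGrading Φ h g γ))
    (D.disjoint_zero.mono_right (iSup_le fun γ => ?_))
    (fun β hβ => (D.disjoint β hβ).mono_right (iSup_le fun γ => ?_)) fun β => disjoint_bot_left
  · exact D.rootGrading_induction (p := fun γ U => ⨆ _ : γ ≠ 0, U ≤ ⨆ β ∈ Φ, g β) (by simp)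
      (fun γ hγ => iSup_le fun _ => le_iSup₂_of_le γ hγ le_rfl) (by simp) γ
  · exact D.rootGrading_induction (p := fun γ U => ⨆ _ : γ ≠ β, U ≤ h ⊔ ⨆ δ ∈ Φ.erase β, g δ)
      (iSup_le fun _ => le_sup_left)
      (fun γ hγ => iSup_le fun hne =>
        le_sup_of_le_right (le_iSup₂_of_le γ (Finset.mem_erase.mpr ⟨hne, hγ⟩) le_rfl))
      (by simp) γ

lemma lie_mem_rootGrading (D : IsRootDecomposition Φ h g) (β γ : E) :
    ∀ x ∈ rootGrading Φ h g β, ∀ y ∈ rootGrading Φ h g γ, ⁅x, y⁆ ∈ rootGrading Φ h g (β + γ) := by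
  have of_zero (γ : E) : ∀ x ∈ h, ∀ y ∈ rootGrading Φ h g γ, ⁅x, y⁆ ∈ rootGrading Φ h g γ := by
    intro x hx
    refine D.rootGrading_induction (p := fun _ U => ∀ y ∈ U, ⁅x, y⁆ ∈ U) (fun y hy => ?_)
      (fun γ hγ => D.lie_zero_mem γ hγ x hx) (by simp) γ
    exact D.lie_zero_zero x hx y hy ▸ zero_mem h
  refine D.rootGrading_induction (p := fun β U => ∀ x ∈ U, ∀ y ∈ rootGrading Φ h g γ,
    ⁅x, y⁆ ∈ rootGrading Φ h g (β + γ)) (by simpa only [zero_add] using of_zero γ)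
    (fun β hβ x hx => ?_) (by simp) β
  refine D.rootGrading_induction (p := fun γ V => ∀ y ∈ V, ⁅x, y⁆ ∈ rootGrading Φ h g (β + γ))
    (fun y hy => ?_) (fun γ hγ y hy => ?_) (by simp) γ
  · rw [add_zero, ← lie_skew]
    exact neg_mem (of_zero β y hy x ((D.rootGrading_of_mem hβ).symm ▸ hx))
  · obtain ⟨mem_root, mem_zero, eq_zero⟩ := D.lie_mem β hβ γ hγ x hx y hy
    by_cases hroot : β + γ ∈ Φ
    · exact (D.rootGrading_of_mem hroot).symm ▸ mem_root hroot
    by_cases hzero : β + γ = 0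
    · rw [hzero, rootGrading_zero]
      exact mem_zero hzero
    · exact eq_zero hroot hzero ▸ zero_mem _

/-- The root decomposition makes `L` a graded Lie algebra. -/
@[reducible]
noncomputable def gradedLieAlgebra (D : IsRootDecomposition Φ h g) :
    GradedLieAlgebra (rootGrading Φ h g) where
  bracket_mem β γ _ _ hx hy := D.lie_mem_rootGrading β γ _ hx _ hy
  toDecomposition := (DirectSum.isInternal_submodule_of_iSupIndep_of_iSup_eq_top
    D.iSupIndep_rootGrading D.iSup_rootGrading).chooseDecomposition

lemma isLieAbelian_degreeZero (D : IsRootDecomposition Φ h g)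
    [GradedLieAlgebra (rootGrading Φ h g)] :
    IsLieAbelian (degreeZero (rootGrading Φ h g)) where
  trivial x y := by
    have mem (z : degreeZero (rootGrading Φ h g)) : (z : L) ∈ h := rootGrading_zero.le z.2
    exact Subtype.ext (D.lie_zero_zero x (mem x) y (mem y))

lemma biSup_rootGrading (D : IsRootDecomposition Φ h g) {p q : E → Prop}
    (hqp : ∀ β ∈ Φ, q β ↔ p β) (hq0 : ¬ q 0) :
    ⨆ β ∈ {β | q β}, rootGrading Φ h g β = ⨆ β ∈ {β | β ∈ Φ ∧ p β}, g β := by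
  apply le_antisymm
  · refine iSup_le fun β => D.rootGrading_induction
      (p := fun β U => ⨆ _ : β ∈ {β | q β}, U ≤ ⨆ β ∈ {β | β ∈ Φ ∧ p β}, g β)
      (iSup_le fun hq => absurd hq hq0) (fun β hβ => iSup_le fun hq => ?_) (by simp) β
    exact le_iSup₂_of_le (f := fun β _ => g β) β ⟨hβ, (hqp β hβ).mp hq⟩ le_rfl
  · refine iSup₂_le fun β ⟨hβ, hp⟩ => ?_
    rw [← D.rootGrading_of_mem hβ]
    exact le_iSup₂_of_le (f := fun β _ => rootGrading Φ h g β) β ((hqp β hβ).mpr hp) le_rfl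

end IsRootDecomposition

end RootDecomposition

section RootBase

variable {E : Type*}

lemma exists_linearMap_forall_mem_eq {k : Type*} [Field k] [AddCommGroup E] [Module k E]
    {Δ : Finset E} (hΔ : LinearIndependent k (fun γ : Δ => (γ : E))) (c : E → k) :
    ∃ ℓ : E →ₗ[k] k, ∀ γ ∈ Δ, ℓ γ = c γ := by
  obtain ⟨ℓ, hℓ⟩ := ((Module.Basis.span hΔ).constr k fun γ => c γ).exists_extend
  refine ⟨ℓ, fun γ hγ => ?_⟩
  have hbasis := (Module.Basis.span hΔ).constr_basis k (fun γ => c γ) ⟨γ, hγ⟩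
  rwa [← hℓ, LinearMap.comp_apply, Submodule.subtype_apply, Module.Basis.span_apply] at hbasis

/-- `Δ` is a base of the root system `Φ`, and `n β γ` is the coefficient of the simple root `γ` in
the root `β`. The values `n β γ` with `β ∉ Φ` or `γ ∉ Δ` are arbitrary. -/
structure IsRootBase [AddCommGroup E] [Module ℝ E] (Φ Δ : Finset E) (n : E → E → ℤ) : Prop where
  subset : (Δ : Set E) ⊆ Φ
  linearIndependent : LinearIndependent ℝ (fun γ : Δ => (γ : E))
  eq_sum : ∀ β ∈ Φ, β = ∑ γ ∈ Δ, (n β γ : ℝ) • γ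
  sign : ∀ β ∈ Φ, (∀ γ ∈ Δ, 0 ≤ n β γ) ∨ ∀ γ ∈ Δ, n β γ ≤ 0

namespace IsRootBase

variable [AddCommGroup E] [Module ℝ E] {Φ Δ : Finset E} {n : E → E → ℤ}

lemma exists_linearMap_eq_height (B : IsRootBase Φ Δ n) {S : Finset E} (hS : S ⊆ Δ) :
    ∃ ℓ : E →ₗ[ℝ] ℝ, (∀ γ ∈ Δ, ℓ γ = if γ ∈ S then 1 else 0) ∧
      ∀ β ∈ Φ, ℓ β = (∑ γ ∈ S, n β γ : ℤ) := by
  obtain ⟨ℓ, hℓ⟩ := exists_linearMap_forall_mem_eq B.linearIndependent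
    fun γ => if γ ∈ S then (1 : ℝ) else 0
  refine ⟨ℓ, hℓ, fun β hβ => ?_⟩
  calc ℓ β = ∑ γ ∈ Δ, (n β γ : ℝ) * ℓ γ := by
        conv_lhs => rw [B.eq_sum β hβ]
        simp only [map_sum, map_smul, smul_eq_mul]
    _ = ∑ γ ∈ Δ, if γ ∈ S then (n β γ : ℝ) else 0 :=
        Finset.sum_congr rfl fun γ hγ => by rw [hℓ γ hγ, mul_ite, mul_one, mul_zero]
    _ = (∑ γ ∈ S, n β γ : ℤ) := by
        rw [← Finset.sum_filter, Finset.filter_mem_eq_inter, Finset.inter_eq_right.mpr hS,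
          Int.cast_sum]

lemma exists_linearMap_eq_coeff (B : IsRootBase Φ Δ n) {α : E} (hα : α ∈ Δ) :
    ∃ ν : E →ₗ[ℝ] ℝ, ν α = 1 ∧ (∀ γ ∈ Δ, γ ≠ α → ν γ = 0) ∧ ∀ β ∈ Φ, ν β = n β α := by
  obtain ⟨ν, hνΔ, hνΦ⟩ := B.exists_linearMap_eq_height (Finset.singleton_subset_iff.mpr hα)
  simp only [Finset.mem_singleton, Finset.sum_singleton] at hνΔ hνΦ
  exact ⟨ν, (hνΔ α hα).trans (if_pos rfl), fun γ hγ hne => (hνΔ γ hγ).trans (if_neg hne), hνΦ⟩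

lemma neg_add_notMem (B : IsRootBase Φ Δ n) {α γ : E} (hα : α ∈ Δ) (hγ : γ ∈ Δ) (hne : γ ≠ α) :
    -α + γ ∉ Φ := by
  intro hmem
  obtain ⟨a, haα, haΔ, haΦ⟩ := B.exists_linearMap_eq_coeff hα
  obtain ⟨c, hcγ, hcΔ, hcΦ⟩ := B.exists_linearMap_eq_coeff hγ
  have hnα : (n (-α + γ) α : ℝ) = -1 := by
    rw [← haΦ _ hmem, map_add, map_neg, haα, haΔ γ hγ hne, add_zero]
  have hnγ : (n (-α + γ) γ : ℝ) = 1 := by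
    rw [← hcΦ _ hmem, map_add, map_neg, hcγ, hcΔ α hα hne.symm, neg_zero, zero_add]
  rcases B.sign _ hmem with hsign | hsign
  · have : (0 : ℝ) ≤ n (-α + γ) α := by exact_mod_cast hsign α hα
    linarith
  · have : (n (-α + γ) γ : ℝ) ≤ 0 := by exact_mod_cast hsign γ hγ
    linarith

lemma ne_neg (B : IsRootBase Φ Δ n) {α γ : E} (hα : α ∈ Δ) (hγ : γ ∈ Δ) (hne : γ ≠ α) :
    γ ≠ -α := by
  obtain ⟨ν, hνα, hνΔ, -⟩ := B.exists_linearMap_eq_coeff hα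
  rintro rfl
  simpa [hνα] using hνΔ (-α) hγ hne

end IsRootBase

end RootBase

section LongSimpleRoot

open LieAlgebra

variable {E K L : Type*} [NormedAddCommGroup E] [InnerProductSpace ℝ E] [Field K]
  [LieRing L] [LieAlgebra K L] {Φ Δ : Finset E} {n : E → E → ℤ} {h : Submodule K L}
  {g : E → Submodule K L} {α : E}

/-- The set `Σ_q = {α} ∪ N(α)` of the simple root `α` and its neighbours in the Dynkin diagram. -/
noncomputable def crossedRoots (Δ : Finset E) (α : E) : Finset E :=
  insert α (Δ.filter fun γ => γ ≠ α ∧ ⟪γ, α⟫ ≠ 0)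

lemma self_mem_crossedRoots : α ∈ crossedRoots Δ α := Finset.mem_insert_self _ _

lemma crossedRoots_subset (hα : α ∈ Δ) : crossedRoots Δ α ⊆ Δ :=
  Finset.insert_subset hα (Finset.filter_subset _ _)

lemma mem_crossedRoots_iff_of_ne {γ : E} (hγ : γ ∈ Δ) (hne : γ ≠ α) :
    γ ∈ crossedRoots Δ α ↔ ⟪γ, α⟫ ≠ 0 := by
  simp [crossedRoots, hγ, hne]

lemma IsRootDecomposition.isLongDegree (D : IsRootDecomposition Φ h g) (hα : α ∈ Φ)
    (hlong : ∀ β ∈ Φ, ⟪β, β⟫ ≤ ⟪α, α⟫)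
    (hcrys : ∀ β ∈ Φ, ∃ m : ℤ, 2 * ⟪β, α⟫ / ⟪α, α⟫ = m) :
    IsLongDegree (rootGrading Φ h g) α where
  ne_zero := ne_of_mem_of_not_mem hα D.zero_notMem
  ne_bot := D.rootGrading_of_mem hα ▸ D.ne_bot α hα
  inner_self_le β hβ := by
    rcases eq_zero_or_mem_of_rootGrading_ne_bot hβ with rfl | hβΦ
    · rw [inner_zero_left]
      exact real_inner_self_nonneg
    · exact hlong β hβΦ
  exists_int β hβ := by
    rcases eq_zero_or_mem_of_rootGrading_ne_bot hβ with rfl | hβΦ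
    · exact ⟨0, by simp⟩
    · obtain ⟨m, hm⟩ := hcrys β hβΦ
      have hαα : ⟪α, α⟫ ≠ 0 := inner_self_ne_zero.mpr (ne_of_mem_of_not_mem hα D.zero_notMem)
      exact ⟨m, (div_eq_iff hαα).mp hm⟩

namespace IsRootBase

variable {t e f : L} [CharZero K] [GradedLieAlgebra (rootGrading Φ h g)]

lemma inner_nonpos (B : IsRootBase Φ Δ n) (hlong : IsLongDegree (rootGrading Φ h g) α)
    (T : IsCorootTriple (rootGrading Φ h g) α t e f) (hα : α ∈ Δ) {γ : E} (hγ : γ ∈ Δ)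
    (hne : γ ≠ α) (hGγ : rootGrading Φ h g γ ≠ ⊥) : ⟪γ, α⟫ ≤ 0 := by
  by_contra! hpos
  rcases eq_zero_or_mem_of_rootGrading_ne_bot (T.neg_add_ne_bot hlong hpos hGγ) with hzero | hmem
  · exact hne (neg_add_eq_zero.mp hzero).symm
  · exact B.neg_add_notMem hα hγ hne hmem

lemma two_mul_inner_eq (B : IsRootBase Φ Δ n) (D : IsRootDecomposition Φ h g)
    (hlong : IsLongDegree (rootGrading Φ h g) α)
    (T : IsCorootTriple (rootGrading Φ h g) α t e f) (hα : α ∈ Δ) {γ : E} (hγ : γ ∈ Δ)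
    (hne : γ ≠ α) :
    2 * ⟪γ, α⟫ = -(if γ ∈ crossedRoots Δ α then 1 else 0) * ⟪α, α⟫ := by
  have hmem := mem_crossedRoots_iff_of_ne hγ hne
  rcases eq_or_ne ⟪γ, α⟫ 0 with hzero | hnonzero
  · rw [if_neg (hmem.not.mpr (not_not.mpr hzero)), hzero, mul_zero, neg_zero, zero_mul]
  have hGγ : rootGrading Φ h g γ ≠ ⊥ :=
    D.rootGrading_of_mem (B.subset hγ) ▸ D.ne_bot γ (B.subset hγ)
  have hneg : ⟪γ, α⟫ < 0 := lt_of_le_of_ne (B.inner_nonpos hlong T hα hγ hne hGγ) hnonzero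
  rw [if_pos (hmem.mpr hnonzero), neg_one_mul,
    hlong.pairing_eq_neg_of_inner_neg hGγ (B.ne_neg hα hγ hne) hneg]

lemma isHeightPair (B : IsRootBase Φ Δ n) (D : IsRootDecomposition Φ h g)
    (hlong : IsLongDegree (rootGrading Φ h g) α)
    (T : IsCorootTriple (rootGrading Φ h g) α t e f) (hα : α ∈ Δ) {ν η : E →ₗ[ℝ] ℝ}
    (hνα : ν α = 1) (hνΔ : ∀ γ ∈ Δ, γ ≠ α → ν γ = 0) (hνΦ : ∀ β ∈ Φ, ν β = n β α)
    (hηΔ : ∀ γ ∈ Δ, η γ = if γ ∈ crossedRoots Δ α then 1 else 0) :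
    IsHeightPair (rootGrading Φ h g) α ν η where
  ν_self := hνα
  η_self := (hηΔ α hα).trans (if_pos self_mem_crossedRoots)
  exists_int β hβ := by
    rcases eq_zero_or_mem_of_rootGrading_ne_bot hβ with rfl | hβΦ
    · exact ⟨0, by simp⟩
    · exact ⟨n β α, hνΦ β hβΦ⟩
  pairing_eq β hβ := by
    have hηα : η α = 1 := (hηΔ α hα).trans (if_pos self_mem_crossedRoots)
    have heq : Set.EqOn ((2 : ℝ) • innerₗ E α)
        (⟪α, α⟫ • ((3 : ℝ) • ν - η) : E →ₗ[ℝ] ℝ) (Δ : Set E) := by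
      intro γ hγ
      suffices 2 * ⟪γ, α⟫ = (3 * ν γ - η γ) * ⟪α, α⟫ by
        simpa [real_inner_comm γ, mul_comm] using this
      rcases eq_or_ne γ α with rfl | hne
      · rw [hνα, hηα]
        ring
      · rw [B.two_mul_inner_eq D hlong T hα hγ hne, ← hηΔ γ hγ, hνΔ γ hγ hne, mul_zero, zero_sub]
    have hspan : β ∈ Submodule.span ℝ (Δ : Set E) := by
      rcases eq_zero_or_mem_of_rootGrading_ne_bot hβ with rfl | hβΦ
      · exact zero_mem _
      · rw [B.eq_sum β hβΦ]
        exact sum_mem fun γ hγ => Submodule.smul_mem _ _ (Submodule.subset_span hγ)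
    simpa [real_inner_comm β, mul_comm] using LinearMap.eqOn_span heq hspan

end IsRootBase

lemma IsRootDecomposition.lieTensorIso [CharZero K] [GradedLieAlgebra (rootGrading Φ h g)]
    (D : IsRootDecomposition Φ h g) (hα : α ∈ Φ) {ν η : E →ₗ[ℝ] ℝ}
    (P : IsHeightPair (rootGrading Φ h g) α ν η) {t e f : L}
    (T : IsCorootTriple (rootGrading Φ h g) α t e f)
    (hlong : IsLongDegree (rootGrading Φ h g) α) {p q : E → Prop}
    (hp : ∀ β ∈ Φ, ν β = 0 ∧ η β = 1 ↔ p β) (hq : ∀ β ∈ Φ, η β = 2 ↔ q β) :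
    LieTensorIso (g α) (⨆ β ∈ {β | β ∈ Φ ∧ p β}, g β) (⨆ β ∈ {β | β ∈ Φ ∧ q β}, g β) := by
  rw [← D.rootGrading_of_mem hα, ← D.biSup_rootGrading hp (by simp),
    ← D.biSup_rootGrading hq (by simp)]
  exact P.lieTensorIso T hlong

end LongSimpleRoot

end BracketTensorIso

open BracketTensorIso in
theorem bracket_tensor_iso_q2_general {E K L : Type*} [NormedAddCommGroup E]
    [InnerProductSpace ℝ E] [Field K] [CharZero K] [IsAlgClosed K] [LieRing L] [LieAlgebra K L]
    [FiniteDimensional K L] [LieAlgebra.IsSimple K L] {Φ Δ : Finset E} {n : E → E → ℤ}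
    {h : Submodule K L} {g : E → Submodule K L} {α : E} (D : IsRootDecomposition Φ h g)
    (B : IsRootBase Φ Δ n) (hα : α ∈ Δ) (hlong : ∀ β ∈ Φ, ⟪β, β⟫ ≤ ⟪α, α⟫)
    (hcrys : ∀ β ∈ Φ, ∃ m : ℤ, 2 * ⟪β, α⟫ / ⟪α, α⟫ = m) :
    LieTensorIso (g α)
        (⨆ β ∈ {β | β ∈ Φ ∧ n β α = 0 ∧ ∑ γ ∈ crossedRoots Δ α, n β γ = 1}, g β)
        (⨆ β ∈ {β | β ∈ Φ ∧ ∑ γ ∈ crossedRoots Δ α, n β γ = 2}, g β) ∧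
      LieTensorIso (g (-α))
        (⨆ β ∈ {β | β ∈ Φ ∧ n β α = 0 ∧ ∑ γ ∈ crossedRoots Δ α, n β γ = -1}, g β)
        (⨆ β ∈ {β | β ∈ Φ ∧ ∑ γ ∈ crossedRoots Δ α, n β γ = -2}, g β) := by
  let := D.gradedLieAlgebra
  have := D.isLieAbelian_degreeZero
  have hdeg := D.isLongDegree (B.subset hα) hlong hcrys
  obtain ⟨t, e, f, T⟩ := hdeg.exists_isCorootTriple
  obtain ⟨ν, hνα, hνΔ, hνΦ⟩ := B.exists_linearMap_eq_coeff hα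
  obtain ⟨η, hηΔ, hηΦ⟩ := B.exists_linearMap_eq_height (crossedRoots_subset hα)
  have P := B.isHeightPair D hdeg T hα hνα hνΔ hνΦ hηΔ
  have hnegα : -α ∈ Φ := (eq_zero_or_mem_of_rootGrading_ne_bot T.ne_bot_neg).resolve_left
    (neg_ne_zero.mpr hdeg.ne_zero)
  refine ⟨D.lieTensorIso (B.subset hα) P T hdeg (fun β hβ => ?_) fun β hβ => ?_,
    D.lieTensorIso hnegα P.neg T.symm (hdeg.neg T.ne_bot_neg) (fun β hβ => ?_) fun β hβ => ?_⟩ <;>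
  · simp only [LinearMap.neg_apply, neg_eq_iff_eq_neg, hνΦ β hβ, hηΦ β hβ]
    norm_cast

/-- Let `𝔤 = L` be a finite-dimensional complex simple Lie algebra with root system `Φ`
(realized in a real inner product space `E`, with root spaces `g β` and root space
decomposition), base `Δ`, and let `α ∈ Δ` be a long simple root; set
`Σ_q := {α} ∪ N(α)`, `q_1^V := ⊕{𝔤_β : n_α(β) = 0, ht_{Σ_q}(β) = 1}` and
`q_2 := ⊕_{ht_{Σ_q}(δ)=2} 𝔤_δ`.  Then the Lie bracket induces a linear isomorphism
`𝔤_α ⊗ q_1^V → q_2`, `X ⊗ Y ↦ ⁅X, Y⁆`; similarly `𝔤_{-α} ⊗ q_{-1}^V → q_{-2}` is an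
isomorphism. -/
theorem bracket_tensor_iso_q2
    {E : Type*} [NormedAddCommGroup E] [InnerProductSpace ℝ E]
    {L : Type*} [LieRing L] [LieAlgebra ℂ L] [FiniteDimensional ℂ L]
    [LieAlgebra.IsSimple ℂ L]
    (Φ : Finset E)
    (hΦ0 : (0 : E) ∉ Φ)
    (hspan : Submodule.span ℝ (Φ : Set E) = ⊤)
    (hrefl : ∀ α ∈ Φ, ∀ β ∈ Φ, β - (2 * ⟪β, α⟫ / ⟪α, α⟫) • α ∈ Φ)
    (hcrys : ∀ α ∈ Φ, ∀ β ∈ Φ, ∃ m : ℤ, 2 * ⟪β, α⟫ / ⟪α, α⟫ = (m : ℝ))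
    (hred : ∀ α ∈ Φ, ∀ t : ℝ, t • α ∈ Φ → t = 1 ∨ t = -1)
    (hirr : ∀ S : Set E,
      (∀ β ∈ Φ, ∀ γ ∈ Φ, β ∈ S → ⟪β, γ⟫ ≠ 0 → γ ∈ S) →
      (∃ β ∈ Φ, β ∈ S) → ∀ β ∈ Φ, β ∈ S)
    (Δ : Finset E) (hΔΦ : (Δ : Set E) ⊆ (Φ : Set E))
    (hΔli : LinearIndependent ℝ (fun γ : Δ => (γ : E)))
    (n : E → E → ℤ)
    (hn : ∀ β ∈ Φ, β = ∑ γ ∈ Δ, (n β γ : ℝ) • γ)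
    (hsign : ∀ β ∈ Φ, (∀ γ ∈ Δ, 0 ≤ n β γ) ∨ (∀ γ ∈ Δ, n β γ ≤ 0))
    -- the Cartan subalgebra and the root space decomposition
    (h : Submodule ℂ L) (g : E → Submodule ℂ L)
    (habel : ∀ x ∈ h, ∀ y ∈ h, ⁅x, y⁆ = 0)
    (hgne : ∀ β ∈ Φ, g β ≠ ⊥)
    (hhg : ∀ β ∈ Φ, ∀ x ∈ h, ∀ y ∈ g β, ⁅x, y⁆ ∈ g β)
    (hgg : ∀ β ∈ Φ, ∀ γ ∈ Φ, ∀ x ∈ g β, ∀ y ∈ g γ,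
      (β + γ ∈ Φ → ⁅x, y⁆ ∈ g (β + γ)) ∧ (β + γ = 0 → ⁅x, y⁆ ∈ h) ∧
      (β + γ ∉ Φ → β + γ ≠ 0 → ⁅x, y⁆ = 0))
    (hdec : h ⊔ (⨆ β ∈ Φ, g β) = ⊤)
    (hindh : Disjoint h (⨆ β ∈ Φ, g β))
    (hindg : ∀ β ∈ Φ, Disjoint (g β) (h ⊔ ⨆ γ ∈ Φ.erase β, g γ))
    -- the long simple root `α`, its Dynkin neighbors, `Σ_q` and the height `ht_{Σ_q}`
    (α : E) (hαΔ : α ∈ Δ)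
    (hlong : ∀ γ ∈ Φ, ⟪γ, γ⟫ ≤ ⟪α, α⟫)
    (Nbr : Finset E) (hNbr : Nbr = Δ.filter fun γ => γ ≠ α ∧ ⟪γ, α⟫ ≠ 0)
    (Sq : Finset E) (hSq : Sq = insert α Nbr)
    (htq : E → ℤ) (hhtq : ∀ β, htq β = ∑ γ ∈ Sq, n β γ)
    -- the subspaces `q_{±1}^V` and `q_{±2}`
    (q1V qm1V q2 qm2 : Submodule ℂ L)
    (hq1V : q1V = ⨆ β ∈ {β : E | β ∈ Φ ∧ n β α = 0 ∧ htq β = 1}, g β)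
    (hqm1V : qm1V = ⨆ β ∈ {β : E | β ∈ Φ ∧ n β α = 0 ∧ htq β = -1}, g β)
    (hq2 : q2 = ⨆ δ ∈ {δ : E | δ ∈ Φ ∧ htq δ = 2}, g δ)
    (hqm2 : qm2 = ⨆ δ ∈ {δ : E | δ ∈ Φ ∧ htq δ = -2}, g δ) :
    (∃ e : (↥(g α) ⊗[ℂ] ↥q1V) ≃ₗ[ℂ] ↥q2,
      ∀ (x : g α) (y : q1V), (e (x ⊗ₜ[ℂ] y) : L) = ⁅(x : L), (y : L)⁆) ∧
    (∃ e : (↥(g (-α)) ⊗[ℂ] ↥qm1V) ≃ₗ[ℂ] ↥qm2,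
      ∀ (x : g (-α)) (y : qm1V), (e (x ⊗ₜ[ℂ] y) : L) = ⁅(x : L), (y : L)⁆) := by
  subst hq1V hqm1V hq2 hqm2 hSq hNbr
  obtain rfl : htq = _ := funext hhtq
  exact bracket_tensor_iso_q2_general ⟨hΦ0, habel, hgne, hhg, hgg, hdec, hindh, hindg⟩
    ⟨hΔΦ, hΔli, hn, hsign⟩ hαΔ hlong (hcrys α (hΔΦ hαΔ))
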